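/- arXiv:math/0509549 — 2 statements merged into one kernel-verified Lean document; each statement's English description precedes it below -/
import Mathlib

section
/- Let k be a field and x, y ∈ O nonzero split octonions with Q(x) = Q(y) = 0. Then the following are equivalent: (i) dim_k(L(x) ∩ L(y)) ≥ 2; (ii) dim_k(R(x) ∩ R(y)) ≥ 2; (iii) ⟨x,y⟩ = 0. -/
/-!
If `⟨x, y⟩ ≠ 0`, then `L(x) ∩ L(y) = 0`: an element `w` of the intersection is killed by left
multiplication by `x̄` and by `ȳ`, and `x (ȳ w) + y (x̄ w) = ⟨x, y⟩ w`.

If `⟨x, y⟩ = 0`, the same identity shows that `N b = x (ȳ b) = -y (x̄ b)` maps into `L(x) ∩ L(y)`.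
The form `(a, b) ↦ ⟨a, N b⟩` is alternating, so `N` has rank at least two unless it is zero
(`two_le_finrank_of_alternating`). A coordinate computation
(`exists_smul_of_omul_oconj_eq_zero`) shows that `N = 0` only when `y` is a multiple of `x`. In that
case `L(x) = L(y)`, which has dimension at least two by the same argument applied to `x` and any
vector orthogonal to `x` that is not a multiple of it; isotropy of that vector is not required.

The statement for right multiplications follows by conjugation, which maps `L(x̄)` onto `R(x)` and
preserves `Q` and the bilinear form.
-/

open Matrix

/-- 2×2 matrices over `R`. -/
abbrev M2 (R : Type*) := Matrix (Fin 2) (Fin 2) R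

/-- The split octonions over `R`: pairs of 2×2 matrices. -/
abbrev Oct (R : Type*) := M2 R × M2 R

variable {R : Type*} [CommRing R]

/-- Octonion multiplication (Cayley–Dickson on 2×2 matrices). -/
def omul (x y : Oct R) : Oct R :=
  (x.1 * y.1 - y.2.adjugate * x.2, x.2 * y.1.adjugate + y.2 * x.1)

/-- Octonion conjugation. -/
def oconj (x : Oct R) : Oct R := (x.1.adjugate, -x.2)

/-- The norm of a split octonion. -/
def oQ (x : Oct R) : R := x.1.det + x.2.det

/-- The associated bilinear form. -/
def obil (x y : Oct R) : R := oQ (x + y) - oQ x - oQ y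

lemma adj_add (A B : M2 R) : (A + B).adjugate = A.adjugate + B.adjugate := by
  ext i j
  fin_cases i <;> fin_cases j <;>
    simp [Matrix.adjugate_fin_two] <;> ring

lemma adj_smul (c : R) (A : M2 R) : (c • A).adjugate = c • A.adjugate := by
  rw [Matrix.adjugate_smul]
  norm_num

/-- Left multiplication by `z` as a linear map. -/
def Lmap (z : Oct R) : Oct R →ₗ[R] Oct R where
  toFun w := omul z w
  map_add' a b := by
    simp only [omul, Prod.fst_add, Prod.snd_add, adj_add, Prod.mk_add_mk]
    rw [Prod.ext_iff]
    constructor <;> dsimp only <;> noncomm_ring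
  map_smul' c a := by
    simp only [omul, Prod.smul_fst, Prod.smul_snd, adj_smul, RingHom.id_apply, Prod.smul_mk]
    rw [Prod.ext_iff]
    constructor <;> dsimp only <;>
      simp [Matrix.mul_smul, Matrix.smul_mul, smul_sub]

/-- Right multiplication by `z` as a linear map. -/
def Rmap (z : Oct R) : Oct R →ₗ[R] Oct R where
  toFun w := omul w z
  map_add' a b := by
    simp only [omul, Prod.fst_add, Prod.snd_add, Prod.mk_add_mk]
    rw [Prod.ext_iff]
    constructor <;> dsimp only <;> noncomm_ring
  map_smul' c a := by
    simp only [omul, Prod.smul_fst, Prod.smul_snd, RingHom.id_apply, Prod.smul_mk]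
    rw [Prod.ext_iff]
    constructor <;> dsimp only <;>
      simp [Matrix.mul_smul, Matrix.smul_mul, smul_sub]

/-- `L(z)`: the range of left multiplication by `z`. -/
def Lsub (z : Oct R) : Submodule R (Oct R) := LinearMap.range (Lmap z)

/-- `R(z)`: the range of right multiplication by `z`. -/
def Rsub (z : Oct R) : Submodule R (Oct R) := LinearMap.range (Rmap z)

lemma oct_ext {u v : Oct R} (h1 : ∀ i j, u.1 i j = v.1 i j) (h2 : ∀ i j, u.2 i j = v.2 i j) :
    u = v :=
  Prod.ext (Matrix.ext h1) (Matrix.ext h2)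

lemma adj_apply (A : M2 R) : A.adjugate 0 0 = A 1 1 ∧ A.adjugate 0 1 = -A 0 1 ∧
    A.adjugate 1 0 = -A 1 0 ∧ A.adjugate 1 1 = A 0 0 := by
  simp [Matrix.adjugate_fin_two]

lemma omul_fst_apply (x y : Oct R) (i j : Fin 2) : (omul x y).1 i j =
    x.1 i 0 * y.1 0 j + x.1 i 1 * y.1 1 j -
      (y.2.adjugate i 0 * x.2 0 j + y.2.adjugate i 1 * x.2 1 j) := by
  simp [omul, Matrix.mul_apply, Fin.sum_univ_two]

lemma omul_snd_apply (x y : Oct R) (i j : Fin 2) : (omul x y).2 i j =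
    x.2 i 0 * y.1.adjugate 0 j + x.2 i 1 * y.1.adjugate 1 j +
      (y.2 i 0 * x.1 0 j + y.2 i 1 * x.1 1 j) := by
  simp [omul, Matrix.mul_apply, Fin.sum_univ_two]

lemma oconj_fst (x : Oct R) : (oconj x).1 = x.1.adjugate := rfl

lemma oconj_snd_apply (x : Oct R) (i j : Fin 2) : (oconj x).2 i j = -x.2 i j := rfl

lemma oQ_eq (x : Oct R) : oQ x =
    x.1 0 0 * x.1 1 1 - x.1 0 1 * x.1 1 0 + (x.2 0 0 * x.2 1 1 - x.2 0 1 * x.2 1 0) := by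
  simp [oQ, Matrix.det_fin_two]

lemma obil_eq (x y : Oct R) : obil x y =
    x.1 0 0 * y.1 1 1 + x.1 1 1 * y.1 0 0 - x.1 0 1 * y.1 1 0 - x.1 1 0 * y.1 0 1 +
    (x.2 0 0 * y.2 1 1 + x.2 1 1 * y.2 0 0 - x.2 0 1 * y.2 1 0 - x.2 1 0 * y.2 0 1) := by
  simp [oQ, obil, Matrix.det_fin_two]
  ring

/-- `x̄ (x a) = Q(x) a`; so for isotropic `x` every element of `L(x)` is killed by `x̄`. -/
lemma oconj_omul_cancel (x a : Oct R) : omul (oconj x) (omul x a) = oQ x • a := by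
  apply oct_ext <;> simp only [Fin.forall_fin_two, omul_fst_apply, omul_snd_apply, oconj_fst,
    oconj_snd_apply, adj_apply, Prod.smul_fst, Prod.smul_snd, Matrix.smul_apply, smul_eq_mul,
    oQ_eq] <;> refine ⟨⟨?_, ?_⟩, ?_, ?_⟩ <;> ring

/-- The polarization `x (ȳ w) + y (x̄ w) = ⟨x, y⟩ w` of `x (x̄ w) = Q(x) w`. -/
lemma omul_oconj_polar (x y w : Oct R) :
    omul x (omul (oconj y) w) + omul y (omul (oconj x) w) = obil x y • w := by
  apply oct_ext <;> simp only [Fin.forall_fin_two, omul_fst_apply, omul_snd_apply, oconj_fst,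
    oconj_snd_apply, adj_apply, Prod.smul_fst, Prod.smul_snd, Matrix.smul_apply, smul_eq_mul,
    obil_eq, Prod.fst_add, Prod.snd_add, Matrix.add_apply] <;> refine ⟨⟨?_, ?_⟩, ?_, ?_⟩ <;> ring

lemma oconj_omul (x y : Oct R) : oconj (omul x y) = omul (oconj y) (oconj x) := by
  apply oct_ext <;> simp only [Fin.forall_fin_two, omul_fst_apply, omul_snd_apply, oconj_fst,
    oconj_snd_apply, adj_apply] <;> refine ⟨⟨?_, ?_⟩, ?_, ?_⟩ <;> ring

lemma oconj_oconj (x : Oct R) : oconj (oconj x) = x := by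
  apply oct_ext <;> simp [Fin.forall_fin_two, oconj_fst, oconj_snd_apply, adj_apply]

lemma obil_oconj (x y : Oct R) : obil (oconj x) (oconj y) = obil x y := by
  simp only [obil_eq, oconj_fst, oconj_snd_apply, adj_apply]
  ring

lemma oQ_oconj (x : Oct R) : oQ (oconj x) = oQ x := by
  simp only [oQ_eq, oconj_fst, oconj_snd_apply, adj_apply]
  ring

/-- Together with `obil_omul_antisymm`: when `⟨x, y⟩ = 0`, the bilinear form
`(a, b) ↦ ⟨a, x (ȳ b)⟩` is alternating. -/
lemma obil_self_omul (x y a : Oct R) :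
    obil a (omul x (omul (oconj y) a)) = obil x y * oQ a := by
  simp only [omul_fst_apply, omul_snd_apply, oconj_fst, oconj_snd_apply, adj_apply, oQ_eq, obil_eq]
  ring

lemma obil_omul_antisymm (x y a b : Oct R) :
    obil a (omul x (omul (oconj y) b)) + obil b (omul x (omul (oconj y) a)) =
      obil x y * obil a b := by
  simp only [omul_fst_apply, omul_snd_apply, oconj_fst, oconj_snd_apply, adj_apply, obil_eq]
  ring

lemma obil_combo (a u v : Oct R) (s t : R) :
    obil a (s • u + t • v) = s * obil a u + t * obil a v := by
  simp [obil_eq]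
  ring

/-- The polar form is nondegenerate, in every characteristic. -/
lemma obil_nondeg (u : Oct R) (h : ∀ a, obil a u = 0) : u = 0 := by
  have h1 := fun i j => h (Matrix.single i j 1, 0)
  have h2 := fun i j => h (0, Matrix.single i j 1)
  simp only [Fin.forall_fin_two] at h1 h2
  simp [obil_eq] at h1 h2
  apply oct_ext <;> intro i j <;> fin_cases i <;> fin_cases j <;> simp [*]

/-- If `x (ȳ b) = 0` for all `b`, then `y` is proportional to `x`. The entries of
`x (ȳ b)` for `b` in the standard basis include, up to sign, every `2 × 2` minor of the coordinates
of `(x, y)` except the four belonging to a pair of coordinates dual under `Q`. Differences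
of entries show that any two of these four minors `d`, `d'` agree up to sign; and `d d' = 0` because
the mixed minors vanish, so `d ^ 2 = 0`. -/
lemma exists_smul_of_omul_oconj_eq_zero {k : Type*} [Field k] (x y : Oct k) (hx : x ≠ 0)
    (h : ∀ b, omul x (omul (oconj y) b) = 0) : ∃ c : k, y = c • x := by
  have h1 := fun i j => h (Matrix.single i j 1, 0)
  have h2 := fun i j => h (0, Matrix.single i j 1)
  simp only [Prod.ext_iff, ← Matrix.ext_iff, Fin.forall_fin_two,
    omul_fst_apply, omul_snd_apply, oconj_fst, oconj_snd_apply, adj_apply] at h1 h2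
  simp at h1 h2
  -- In `key11` and `key22` the minors of dual coordinates need the sign comparison and `d ^ 2 = 0`.
  have key11 : ∀ i j i' j', y.1 i j * x.1 i' j' = y.1 i' j' * x.1 i j := by
    simp only [Fin.forall_fin_two]
    grind
  have key12 : ∀ i j i' j', y.1 i j * x.2 i' j' = y.2 i' j' * x.1 i j := by
    simp only [Fin.forall_fin_two]
    grind
  have key22 : ∀ i j i' j', y.2 i j * x.2 i' j' = y.2 i' j' * x.2 i j := by
    simp only [Fin.forall_fin_two]
    grind
  by_cases hA : ∃ i j, x.1 i j ≠ 0
  · obtain ⟨i, j, hij⟩ := hA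
    refine ⟨y.1 i j / x.1 i j, oct_ext (fun p q => ?_) (fun p q => ?_)⟩
    · have := key11 i j p q
      simp
      field_simp
      linear_combination -this
    · have := key12 i j p q
      simp
      field_simp
      linear_combination -this
  · have hB : ∃ i j, x.2 i j ≠ 0 := by
      by_contra! hB
      push Not at hA
      exact hx (oct_ext hA hB)
    obtain ⟨i, j, hij⟩ := hB
    refine ⟨y.2 i j / x.2 i j, oct_ext (fun p q => ?_) (fun p q => ?_)⟩
    · have := key12 p q i j
      simp
      field_simp
      linear_combination this
    · have := key22 i j p q
      simp
      field_simp
      linear_combination -this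

/-- If `⟨x, y⟩ = 0` and `x (ȳ b) ≠ 0`, pick `a` with `⟨a, x (ȳ b)⟩ ≠ 0`; pairing with `a` and with
`b` shows that `x (ȳ a)` and `x (ȳ b)` are linearly independent. -/
lemma two_le_finrank_of_alternating {k : Type*} [Field k] (S : Submodule k (Oct k)) (x y : Oct k)
    (hxy : obil x y = 0) (hS : ∀ b, omul x (omul (oconj y) b) ∈ S)
    (b : Oct k) (hb : omul x (omul (oconj y) b) ≠ 0) : 2 ≤ Module.finrank k S := by
  obtain ⟨a, ha⟩ : ∃ a, obil a (omul x (omul (oconj y) b)) ≠ 0 := by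
    by_contra! h
    exact hb (obil_nondeg _ h)
  have haa := obil_self_omul x y a
  have hbb := obil_self_omul x y b
  have hab := obil_omul_antisymm x y a b
  rw [hxy, zero_mul] at haa hbb hab
  have hli : LinearIndependent k ![(⟨_, hS a⟩ : S), ⟨_, hS b⟩] := by
    rw [LinearIndependent.pair_iff]
    intro s t hst
    have hst' : s • omul x (omul (oconj y) a) + t • omul x (omul (oconj y) b) = 0 := by
      simpa using congrArg Subtype.val hst
    have ea := obil_combo a (omul x (omul (oconj y) a)) (omul x (omul (oconj y) b)) s t
    have eb := obil_combo b (omul x (omul (oconj y) a)) (omul x (omul (oconj y) b)) s t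
    have h0 : ∀ c : Oct k, obil c 0 = 0 := fun c => by simp [obil_eq]
    rw [hst', h0, haa] at ea
    rw [hst', h0, hbb] at eb
    have ht : t = 0 := by
      have : t * obil a (omul x (omul (oconj y) b)) = 0 := by linear_combination -ea
      exact (mul_eq_zero.mp this).resolve_right ha
    have hs : s = 0 := by
      have : s * obil a (omul x (omul (oconj y) b)) = 0 := by
        linear_combination eb + s * hab
      exact (mul_eq_zero.mp this).resolve_right ha
    exact ⟨hs, ht⟩
  simpa using hli.fintype_card_le_finrank

lemma mem_Lsub {z w : Oct R} : w ∈ Lsub z ↔ ∃ a, omul z a = w := Iff.rfl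

lemma mem_Rsub {z w : Oct R} : w ∈ Rsub z ↔ ∃ a, omul a z = w := Iff.rfl

/-- The hyperplane orthogonal to `x` has dimension at least `7`, so it is not inside the line
spanned by `x`. -/
lemma exists_orthogonal_not_smul {k : Type*} [Field k] (x : Oct k) :
    ∃ a, obil x a = 0 ∧ ∀ c : k, a ≠ c • x := by
  by_contra! h
  let f : Oct k →ₗ[k] k :=
    { toFun := obil x
      map_add' := fun u v => by simpa using obil_combo x u v 1 1
      map_smul' := fun c u => by simpa using obil_combo x u 0 c 0 }
  have hle : LinearMap.ker f ≤ Submodule.span k {x} := fun a ha => by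
    obtain ⟨c, hc⟩ := h a ha
    exact Submodule.mem_span_singleton.mpr ⟨c, hc.symm⟩
  have h1 : Module.finrank k (LinearMap.ker f) ≤ 1 :=
    (Submodule.finrank_mono hle).trans (by simpa using finrank_span_le_card (R := k) ({x} : Set (Oct k)))
  have h2 : Module.finrank k (LinearMap.range f) ≤ 1 :=
    (Submodule.finrank_le _).trans (Module.finrank_self k).le
  have h3 := f.finrank_range_add_finrank_ker
  have h8 : Module.finrank k (Oct k) = 8 := by
    simp [Oct, M2, Module.finrank_prod, Module.finrank_matrix]
  omega

lemma Lsub_smul {k : Type*} [Field k] (x : Oct k) (c : k) (hc : c ≠ 0) :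
    Lsub (c • x) = Lsub x := by
  have hm : ∀ w, omul (c • x) w = omul x (c • w) := fun w => by
    apply oct_ext <;> simp only [Fin.forall_fin_two, omul_fst_apply, omul_snd_apply, adj_apply,
      Prod.smul_fst, Prod.smul_snd, Matrix.smul_apply, smul_eq_mul] <;>
      refine ⟨⟨?_, ?_⟩, ?_, ?_⟩ <;> ring
  ext w
  simp only [mem_Lsub, hm]
  constructor
  · rintro ⟨a, rfl⟩
    exact ⟨_, rfl⟩
  · rintro ⟨a, rfl⟩
    exact ⟨c⁻¹ • a, by rw [smul_inv_smul₀ hc]⟩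

/-- The equivalence for left ideals. In the converse direction, the image of `b ↦ x (ȳ b)` lies in
`L(x) ∩ L(y)` because `x (ȳ b) = -y (x̄ b)`; if the map vanishes then `L(x) = L(y)`, and the same
argument runs with `y` replaced by a vector orthogonal to `x` and not proportional to it. -/
lemma two_le_finrank_Lsub_inf_iff {k : Type*} [Field k] (x y : Oct k) (hx : x ≠ 0) (hy : y ≠ 0)
    (hqx : oQ x = 0) (hqy : oQ y = 0) :
    2 ≤ Module.finrank k ↥(Lsub x ⊓ Lsub y) ↔ obil x y = 0 := by
  constructor
  · intro h
    by_contra hne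
    have hbot : Lsub x ⊓ Lsub y = ⊥ := by
      rw [eq_bot_iff]
      rintro w ⟨⟨a, rfl⟩, ⟨b, hb⟩⟩
      have hb : omul y b = omul x a := hb
      have e := omul_oconj_polar x y (omul x a)
      rw [oconj_omul_cancel, ← hb, oconj_omul_cancel, hqx, hqy, hb] at e
      have h0 : ∀ z : Oct k, omul z 0 = 0 := fun z => (Lmap z).map_zero
      rw [zero_smul, zero_smul, h0, h0, add_zero] at e
      exact (smul_eq_zero.mp e.symm).resolve_left hne
    rw [hbot, finrank_bot] at h
    omega
  · intro hxy
    by_cases hN : ∀ b, omul x (omul (oconj y) b) = 0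
    · obtain ⟨c, rfl⟩ := exists_smul_of_omul_oconj_eq_zero x y hx hN
      have hc : c ≠ 0 := by
        rintro rfl
        simp at hy
      rw [Lsub_smul x c hc, inf_idem]
      obtain ⟨a, ha, hax⟩ := exists_orthogonal_not_smul x
      obtain ⟨b, hb⟩ : ∃ b, omul x (omul (oconj a) b) ≠ 0 := by
        by_contra! h
        obtain ⟨d, hd⟩ := exists_smul_of_omul_oconj_eq_zero x a hx h
        exact hax d hd
      exact two_le_finrank_of_alternating _ x a ha (fun z => ⟨_, rfl⟩) b hb
    · push Not at hN
      obtain ⟨b, hb⟩ := hN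
      refine two_le_finrank_of_alternating _ x y hxy (fun z => ⟨⟨_, rfl⟩, ?_⟩) b hb
      have e := omul_oconj_polar x y z
      rw [hxy, zero_smul] at e
      refine mem_Lsub.mpr ⟨-omul (oconj x) z, ?_⟩
      rw [eq_neg_of_add_eq_zero_left e]
      exact (Lmap y).map_neg _

/-- Octonion conjugation as a linear automorphism. -/
def conjEquiv (R : Type*) [CommRing R] : Oct R ≃ₗ[R] Oct R where
  toFun := oconj
  invFun := oconj
  left_inv := oconj_oconj
  right_inv := oconj_oconj
  map_add' x y := by simp [oconj, adj_add, add_comm]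
  map_smul' c x := by simp [oconj, adj_smul]

/-- Conjugation reverses products, so it carries `L(x̄)` onto `R(x)`. -/
lemma map_conjEquiv_Lsub (x : Oct R) :
    (Lsub (oconj x)).map (conjEquiv R : Oct R →ₗ[R] Oct R) = Rsub x := by
  ext w
  simp only [Submodule.mem_map, mem_Lsub, mem_Rsub]
  constructor
  · rintro ⟨_, ⟨a, rfl⟩, rfl⟩
    refine ⟨oconj a, ?_⟩
    change _ = oconj _
    rw [oconj_omul, oconj_oconj]
  · rintro ⟨a, rfl⟩
    refine ⟨_, ⟨oconj a, rfl⟩, ?_⟩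
    change oconj _ = _
    rw [oconj_omul, oconj_oconj, oconj_oconj]

lemma finrank_Rsub_inf {k : Type*} [Field k] (x y : Oct k) :
    Module.finrank k ↥(Rsub x ⊓ Rsub y) =
      Module.finrank k ↥(Lsub (oconj x) ⊓ Lsub (oconj y)) := by
  rw [← map_conjEquiv_Lsub, ← map_conjEquiv_Lsub, ← Submodule.map_inf _ (conjEquiv k).injective]
  exact LinearEquiv.finrank_map_eq (conjEquiv k) _

theorem stmt2 (k : Type*) [Field k] (x y : Oct k) (hx : x ≠ 0) (hy : y ≠ 0)
    (hqx : oQ x = 0) (hqy : oQ y = 0) :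
    (2 ≤ Module.finrank k ↥(Lsub x ⊓ Lsub y) ↔ 2 ≤ Module.finrank k ↥(Rsub x ⊓ Rsub y)) ∧
    (2 ≤ Module.finrank k ↥(Lsub x ⊓ Lsub y) ↔ obil x y = 0) := by
  have hne : ∀ z : Oct k, z ≠ 0 → oconj z ≠ 0 := fun z hz h =>
    hz ((conjEquiv k).map_eq_zero_iff.mp h)
  have hL := two_le_finrank_Lsub_inf_iff x y hx hy hqx hqy
  have hR := two_le_finrank_Lsub_inf_iff (oconj x) (oconj y) (hne x hx) (hne y hy)
    (by rwa [oQ_oconj]) (by rwa [oQ_oconj])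
  rw [← finrank_Rsub_inf, obil_oconj] at hR
  exact ⟨hL.trans hR.symm, hL⟩
end

section
/- Let k be a field and a, b, c ∈ O split octonions with ⟨a,1⟩ = ⟨b,1⟩ = ⟨c,1⟩ = 0, such that the k-linear span of {a, b, c} is 2-dimensional and u*v = 0 for all u, v in this span. Then there exists no triple (z₁, z₂, z₃) ∈ O³ with Q(z₁) = Q(z₂) = Q(z₃) = 0, z₂*conj(z₁) = a, z₃*conj(z₁) = b, and z₃*conj(z₂) = c. (Equivalently, the corresponding rank-one point of the exceptional Jordan algebra lies in X₀ but not in the image X₁ of the generalized Veronese map ν₂.) -/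
/-!
Write `V` for the span of `a, b, c`, and `tr x = ⟨x, 1⟩`.

*Null planes are cut out by their annihilator.* Let `u, v` be linearly independent and traceless with
`uv = vu = 0`. If `uz = vz = 0`, then `z ∈ span {u, v}` (`mem_span_of_annihilated`). Indeed,
alternativity gives `v(uX) = ⟨v,X⟩u - ⟨u,X⟩v` for every `X`, and nondegeneracy of the norm form
together with the linearized left alternative law writes `z` as `-v(uX)` for a suitable `X`.

*Consequence.* If `xz̄` and `yz̄` are independent elements of `V` with `Q(z) = 0`, both of them
annihilate `z`, so `z ∈ V`. Since the span is two-dimensional, two of `a, b, c` are independent;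
permuting the `zᵢ` (which only changes signs, as `conj` is `-1` on traceless elements), these are
`a = z₂z̄₁` and `b = z₃z̄₁`, so `z₁ ∈ V`. If `c ≠ 0`, it is independent of `a` or of `b`, whence
`z₂ ∈ V` or `z₃ ∈ V`, and then `a = -z₂z₁ = 0` or `b = -z₃z₁ = 0`, which is absurd.

*The case `c = 0`.* Write `z₁ = αa + βb` and `w = αz₂ + βz₃`. Then `wz₁ = -z₁`, `Q(w) = 0` and
`z₂w̄ = z₃w̄ = 0`; `-w` is an idempotent, and the alternative laws force `a` and `b` to be multiples
of `z₁` (`eq_smul_of_idempotent`), contradicting their independence.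
-/

open Matrix

variable {R : Type*} [CommRing R]

/-- The multiplicative unit of the split octonions. -/
def oOne (R : Type*) [CommRing R] : Oct R := (1, 0)

/-! ### Identities of the octonion algebra -/

lemma omul_add' (x y z : Oct R) : omul x (y + z) = omul x y + omul x z := (Lmap x).map_add y z

lemma add_omul' (x y z : Oct R) : omul (x + y) z = omul x z + omul y z := (Rmap z).map_add x y

lemma omul_smul' (r : R) (x y : Oct R) : omul x (r • y) = r • omul x y := (Lmap x).map_smul r y

lemma smul_omul' (r : R) (x y : Oct R) : omul (r • x) y = r • omul x y := (Rmap y).map_smul r x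

lemma omul_neg' (x y : Oct R) : omul x (-y) = -omul x y := (Lmap x).map_neg y

lemma neg_omul' (x y : Oct R) : omul (-x) y = -omul x y := (Rmap y).map_neg x

lemma omul_zero' (x : Oct R) : omul x 0 = 0 := (Lmap x).map_zero

lemma zero_omul' (x : Oct R) : omul 0 x = 0 := (Rmap x).map_zero

lemma oct_ext_s19 {x y : Oct R} (h1 : x.1 0 0 = y.1 0 0) (h2 : x.1 0 1 = y.1 0 1)
    (h3 : x.1 1 0 = y.1 1 0) (h4 : x.1 1 1 = y.1 1 1) (h5 : x.2 0 0 = y.2 0 0)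
    (h6 : x.2 0 1 = y.2 0 1) (h7 : x.2 1 0 = y.2 1 0) (h8 : x.2 1 1 = y.2 1 1) : x = y := by
  ext i j <;> fin_cases i <;> fin_cases j <;> assumption

lemma otr_eq (x : Oct R) : obil x (oOne R) = x.1 0 0 + x.1 1 1 := by
  rw [obil_eq]
  simp [oOne]

/-- The left alternative law `x(xz) = x²z`, polarized and combined with the quadratic equation
`x² = tr(x) x - Q(x)`. -/
lemma left_alt (u s z : Oct R) : omul u (omul s z) + omul s (omul u z) =
    obil u (oOne R) • omul s z + obil s (oOne R) • omul u z - obil u s • z := by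
  rw [otr_eq, otr_eq, obil_eq]
  apply oct_ext_s19 <;> simp [omul, adjugate_fin_two, Matrix.mul_apply, Matrix.vecMul, dotProduct, Fin.sum_univ_two] <;> ring

lemma left_alt_self (w z : Oct R) :
    omul w (omul w z) = obil w (oOne R) • omul w z - oQ w • z := by
  rw [otr_eq, oQ, det_fin_two, det_fin_two]
  apply oct_ext_s19 <;> simp [omul, adjugate_fin_two, Matrix.mul_apply, Matrix.vecMul, dotProduct, Fin.sum_univ_two] <;> ring

/-- The right alternative law, polarized and combined with the quadratic equation. -/
lemma right_alt (z s u : Oct R) : omul (omul z s) u + omul (omul z u) s =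
    obil u (oOne R) • omul z s + obil s (oOne R) • omul z u - obil u s • z := by
  rw [otr_eq, otr_eq, obil_eq]
  apply oct_ext_s19 <;> simp [omul, adjugate_fin_two, Matrix.mul_apply, Matrix.vecMul, dotProduct, Fin.sum_univ_two] <;> ring

/-- The associator is skew in its last two arguments. -/
lemma assoc_skew (v u X : Oct R) : omul v (omul u X) + omul v (omul X u) =
    omul (omul v u) X + omul (omul v X) u := by
  apply oct_ext_s19 <;> simp [omul, adjugate_fin_two, Matrix.mul_apply, Matrix.vecMul, dotProduct, Fin.sum_univ_two] <;> ring

/-- The polarized quadratic equation. -/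
lemma omul_add_omul_swap (x y : Oct R) : omul x y + omul y x =
    obil x (oOne R) • y + obil y (oOne R) • x - obil x y • oOne R := by
  rw [otr_eq, otr_eq, obil_eq]
  apply oct_ext_s19 <;>
    simp [omul, oOne, adjugate_fin_two, Matrix.mul_apply, Matrix.vecMul, dotProduct, Fin.sum_univ_two] <;> ring

lemma oconj_eq (x : Oct R) : oconj x = obil x (oOne R) • oOne R - x := by
  rw [otr_eq]
  apply oct_ext_s19 <;> simp [oconj, oOne, adjugate_fin_two]

lemma omul_one' (x : Oct R) : omul x (oOne R) = x := by
  apply oct_ext_s19 <;> simp [omul, oOne]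

lemma omul_oconj_self (z : Oct R) : omul z (oconj z) = oQ z • oOne R := by
  apply oct_ext_s19 <;>
    simp [omul, oconj, oOne, oQ, det_fin_two, adjugate_fin_two, Matrix.mul_apply, Matrix.vecMul, dotProduct,
      Fin.sum_univ_two] <;> ring

lemma omul_oconj_cancel (x z : Oct R) : omul (omul x (oconj z)) z = oQ z • x := by
  apply oct_ext_s19 <;>
    simp [omul, oconj, oQ, det_fin_two, adjugate_fin_two, Matrix.mul_apply, Matrix.vecMul, dotProduct,
      Fin.sum_univ_two] <;> ring

lemma omul_oconj_swap (x y : Oct R) : omul x (oconj y) = oconj (omul y (oconj x)) := by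
  apply oct_ext_s19 <;>
    simp [omul, oconj, adjugate_fin_two, Matrix.mul_apply, Matrix.vecMul, dotProduct, Fin.sum_univ_two] <;> ring

lemma otr_omul_oconj (x y : Oct R) : obil (omul x (oconj y)) (oOne R) = obil x y := by
  rw [otr_eq, obil_eq]
  simp [omul, oconj, adjugate_fin_two, Matrix.mul_apply, Matrix.vecMul, dotProduct, Fin.sum_univ_two]
  ring

lemma otr_omul (x y : Oct R) : obil (omul x y) (oOne R) =
    obil x (oOne R) * obil y (oOne R) - obil x y := by
  rw [otr_eq, otr_eq, otr_eq, obil_eq]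
  simp [omul, adjugate_fin_two, Matrix.mul_apply, Matrix.vecMul, dotProduct, Fin.sum_univ_two]
  ring

lemma oconj_add_smul (r s : R) (x y : Oct R) :
    oconj (r • x + s • y) = r • oconj x + s • oconj y := by
  apply oct_ext_s19 <;> simp [oconj, adjugate_fin_two] <;> ring

lemma obil_comm (x y : Oct R) : obil x y = obil y x := by
  rw [obil_eq, obil_eq]; ring

lemma obil_self (x : Oct R) : obil x x = 2 * oQ x := by
  rw [obil_eq, oQ, det_fin_two, det_fin_two]; ring

lemma add_smul_obil (r s : R) (x y z : Oct R) :
    obil (r • x + s • y) z = r * obil x z + s * obil y z := by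
  simp only [obil_eq, Prod.fst_add, Prod.snd_add, Prod.smul_fst, Prod.smul_snd,
    Matrix.add_apply, Matrix.smul_apply, smul_eq_mul]
  ring

lemma obil_smul' (r : R) (x y : Oct R) : obil (r • x) y = r * obil x y := by
  simp only [obil_eq, Prod.smul_fst, Prod.smul_snd, Matrix.smul_apply, smul_eq_mul]
  ring

lemma oQ_add_smul (r s : R) (x y : Oct R) :
    oQ (r • x + s • y) = r ^ 2 * oQ x + s ^ 2 * oQ y + r * s * obil x y := by
  simp only [obil_eq, oQ, det_fin_two, Prod.fst_add, Prod.snd_add, Prod.smul_fst, Prod.smul_snd,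
    Matrix.add_apply, Matrix.smul_apply, smul_eq_mul]
  ring

/-- The norm form is nondegenerate: every linear functional is represented by an octonion. -/
lemma exists_obil_eq (f : Oct R →ₗ[R] R) : ∃ s : Oct R, ∀ x, obil x s = f x := by
  let e : Fin 2 → Fin 2 → Oct R := fun i j => (Matrix.single i j 1, 0)
  let e' : Fin 2 → Fin 2 → Oct R := fun i j => (0, Matrix.single i j 1)
  refine ⟨(!![f (e 1 1), -f (e 1 0); -f (e 0 1), f (e 0 0)],
    !![f (e' 1 1), -f (e' 1 0); -f (e' 0 1), f (e' 0 0)]), fun x => ?_⟩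
  have hx : x = x.1 0 0 • e 0 0 + x.1 0 1 • e 0 1 + x.1 1 0 • e 1 0 + x.1 1 1 • e 1 1
      + (x.2 0 0 • e' 0 0 + x.2 0 1 • e' 0 1 + x.2 1 0 • e' 1 0 + x.2 1 1 • e' 1 1) := by
    apply oct_ext_s19 <;> simp [e, e', Matrix.single]
  have hf := congrArg f hx
  simp only [map_add, map_smul, smul_eq_mul] at hf
  rw [hf, obil_eq]
  simp
  ring

/-! ### Null planes -/

/-- If `vu = 0` for traceless `u, v`, the composite of left multiplications by `u` and then `v` has
image in the span of `u` and `v`. -/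
lemma omul_omul_of_null {u v : Oct R} (hu : obil u (oOne R) = 0) (hv : obil v (oOne R) = 0)
    (hvu : omul v u = 0) (X : Oct R) :
    omul v (omul u X) = obil v X • u - obil u X • v := by
  have h1 := right_alt v X u
  have h2 := left_alt v X u
  have h3 := assoc_skew v u X
  simp only [hu, hv, hvu, zero_omul', omul_zero', zero_smul, smul_zero, add_zero, zero_add,
    zero_sub] at h1 h2 h3
  rw [h1, h2] at h3
  rw [sub_eq_add_neg, ← h3]
  abel

lemma exists_dual_obil {k : Type*} [Field k] {u v : Oct k} (h : LinearIndependent k ![u, v]) :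
    ∃ s, obil u s = 1 ∧ obil v s = 0 := by
  have hu : u ∉ Submodule.span k {v} := by
    intro hm
    obtain ⟨r, hr⟩ := Submodule.mem_span_singleton.1 hm
    have := (LinearIndependent.pair_iff.1 h) 1 (-r) (by rw [← hr]; module)
    exact one_ne_zero this.1
  obtain ⟨f, hf, hfv⟩ := Submodule.exists_dual_map_eq_bot_of_notMem hu inferInstance
  have hv : f v = 0 := by
    have : f v ∈ (Submodule.span k {v}).map f :=
      Submodule.mem_map_of_mem (Submodule.mem_span_singleton_self v)
    rw [hfv] at this
    simpa using this
  obtain ⟨s, hs⟩ := exists_obil_eq ((f u)⁻¹ • f)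
  exact ⟨s, by simp [hs, hf], by simp [hs, hv]⟩

/-- The common right annihilator of a null plane is the plane itself. -/
lemma mem_span_of_annihilated {k : Type*} [Field k] {u v z : Oct k}
    (h : LinearIndependent k ![u, v])
    (hu : obil u (oOne k) = 0) (hv : obil v (oOne k) = 0) (hvu : omul v u = 0)
    (huz : omul u z = 0) (hvz : omul v z = 0) : ∃ α β : k, z = α • u + β • v := by
  obtain ⟨s, hs, -⟩ := exists_dual_obil h
  have h' : LinearIndependent k ![v, u] := LinearIndependent.pair_symm_iff.1 h
  obtain ⟨t, ht, hut⟩ := exists_dual_obil h'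
  have h1 := left_alt u s z
  have h2 := left_alt v t z
  have h3 := left_alt t u (omul s z)
  rw [obil_comm t u] at h3
  simp only [hs, ht, hut, hu, hv, huz, hvz, omul_zero', zero_smul, smul_zero, add_zero, zero_sub,
    one_smul, sub_zero] at h1 h2 h3
  rw [h1, omul_neg'] at h3
  have h4 : omul t z = omul u (omul t (omul s z)) + obil t (oOne k) • z := by
    linear_combination (norm := module) -h3
  have h5 := omul_omul_of_null hu hv hvu (omul t (omul s z))
  rw [h4, omul_add', omul_smul', hvz, smul_zero, add_zero, h5] at h2
  refine ⟨-obil v (omul t (omul s z)), obil u (omul t (omul s z)), ?_⟩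
  linear_combination (norm := module) h2

/-! ### The vanishing case -/

/-- Here `-w` is an idempotent, `z` lies in the Peirce component `(-w) O (1 + w)` and `x` in
`O (-w)`. Hence `xz` lies in the span of `z` and `1 + w`; being traceless, it is a multiple of `z`. -/
lemma eq_smul_of_idempotent {k : Type*} [Field k] {w x z : Oct k} (hz : z ≠ 0)
    (htz : obil z (oOne k) = 0) (hwz : omul w z = -z) (hw : oQ w = 0) (hxw : obil w x = 0)
    (hxw' : omul x (oconj w) = 0) (ht : obil (omul x z) (oOne k) = 0) :
    ∃ r : k, omul x z = r • z := by
  have htw : obil w (oOne k) = -1 := by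
    have h := left_alt_self w z
    rw [hwz, omul_neg', hwz, hw, zero_smul, sub_zero, neg_neg] at h
    have h' : (obil w (oOne k) + 1) • z = 0 := by
      rw [add_smul, one_smul]
      nth_rewrite 2 [h]
      simp
    exact eq_neg_of_add_eq_zero_left ((smul_eq_zero.1 h').resolve_right hz)
  have hzw : obil z w = 0 := by
    have h := otr_omul w z
    rw [hwz, htz, mul_zero, zero_sub, obil_comm w z, ← neg_one_smul k z, obil_smul', htz] at h
    simpa using h.symm
  have hx : omul x w = -x := by
    rw [oconj_eq, htw, sub_eq_add_neg, omul_add', omul_smul', omul_one', omul_neg'] at hxw'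
    linear_combination (norm := module) -hxw'
  have h1 : omul w (omul x z) = -obil x (oOne k) • z := by
    have h := left_alt w x z
    rw [htw, hxw, hwz, omul_neg'] at h
    linear_combination (norm := module) h
  have h2 : omul (omul x z) w = 0 := by
    have h := right_alt x z w
    rw [htw, htz, hx, neg_omul', obil_comm w z, hzw] at h
    linear_combination (norm := module) h
  have h3 : obil w (omul x z) = 0 := by
    have h := otr_omul (omul x z) w
    rw [h2, ht, obil_comm _ w] at h
    simpa [otr_eq] using h
  have h4 := omul_add_omul_swap w (omul x z)
  rw [h1, h2, h3, htw, ht] at h4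
  refine ⟨obil x (oOne k), ?_⟩
  linear_combination (norm := module) h4

/-! ### Configurations with values in a null space -/

lemma omul_oconj_swap_neg {x y : Oct R} (h : obil (omul x (oconj y)) (oOne R) = 0) :
    omul y (oconj x) = -omul x (oconj y) := by
  rw [omul_oconj_swap y x, oconj_eq (omul x (oconj y)), h, zero_smul, zero_sub]

section Configuration

variable {k : Type*} [Field k] {V : Submodule k (Oct k)}

/-- Two independent elements of `V` with the common right factor `z̄` put the null octonion `z`
in their span. -/
lemma mem_of_independent (htr : ∀ u ∈ V, obil u (oOne k) = 0)
    (hmul : ∀ u ∈ V, ∀ v ∈ V, omul u v = 0) {x y z : Oct k} (hz : oQ z = 0)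
    (hx : omul x (oconj z) ∈ V) (hy : omul y (oconj z) ∈ V)
    (h : LinearIndependent k ![omul x (oconj z), omul y (oconj z)]) :
    ∃ α β : k, z = α • omul x (oconj z) + β • omul y (oconj z) :=
  mem_span_of_annihilated h (htr _ hx) (htr _ hy) (hmul _ hy _ hx)
    (by rw [omul_oconj_cancel, hz, zero_smul]) (by rw [omul_oconj_cancel, hz, zero_smul])

/-- The independence hypothesis singles out `z₁`; by permuting the three octonions, the other
choices of an independent pair reduce to this one. -/
lemma false_of_independent (htr : ∀ u ∈ V, obil u (oOne k) = 0)
    (hmul : ∀ u ∈ V, ∀ v ∈ V, omul u v = 0) {z₁ z₂ z₃ : Oct k}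
    (h1 : oQ z₁ = 0) (h2 : oQ z₂ = 0) (h3 : oQ z₃ = 0)
    (ha : omul z₂ (oconj z₁) ∈ V) (hb : omul z₃ (oconj z₁) ∈ V) (hc : omul z₃ (oconj z₂) ∈ V)
    (h : LinearIndependent k ![omul z₂ (oconj z₁), omul z₃ (oconj z₁)]) : False := by
  have ha0 : omul z₂ (oconj z₁) ≠ 0 := h.ne_zero 0
  have hb0 : omul z₃ (oconj z₁) ≠ 0 := h.ne_zero 1
  have hconj : ∀ {x z : Oct k}, z ∈ V → omul x (oconj z) = -omul x z := by
    intro x z hz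
    rw [oconj_eq, htr z hz, zero_smul, zero_sub, omul_neg']
  obtain ⟨α, β, hz₁⟩ := mem_of_independent htr hmul h1 ha hb h
  have hz₁V : z₁ ∈ V := by
    rw [hz₁]; exact V.add_mem (V.smul_mem _ ha) (V.smul_mem _ hb)
  have hswapa := omul_oconj_swap_neg (htr _ ha)
  have hswapb := omul_oconj_swap_neg (htr _ hb)
  have hswapc := omul_oconj_swap_neg (htr _ hc)
  -- Independence of `a` and `c` puts `z₂` in `V`, so that `a = -z₂z₁ = 0`; likewise for `b`, `c`.
  have hac : ¬ LinearIndependent k ![omul z₃ (oconj z₂), omul z₁ (oconj z₂)] := by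
    intro hi
    have ha' : omul z₁ (oconj z₂) ∈ V := by rw [hswapa]; exact V.neg_mem ha
    obtain ⟨r, s, hz₂⟩ := mem_of_independent htr hmul h2 hc ha' hi
    have hz₂V : z₂ ∈ V := by
      rw [hz₂]; exact V.add_mem (V.smul_mem _ hc) (V.smul_mem _ ha')
    exact ha0 (by rw [hconj hz₁V, hmul _ hz₂V _ hz₁V, neg_zero])
  have hbc : ¬ LinearIndependent k ![omul z₂ (oconj z₃), omul z₁ (oconj z₃)] := by
    intro hi
    have hb' : omul z₁ (oconj z₃) ∈ V := by rw [hswapb]; exact V.neg_mem hb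
    have hc' : omul z₂ (oconj z₃) ∈ V := by rw [hswapc]; exact V.neg_mem hc
    obtain ⟨r, s, hz₃⟩ := mem_of_independent htr hmul h3 hc' hb' hi
    have hz₃V : z₃ ∈ V := by
      rw [hz₃]; exact V.add_mem (V.smul_mem _ hc') (V.smul_mem _ hb')
    exact hb0 (by rw [hconj hz₁V, hmul _ hz₃V _ hz₁V, neg_zero])
  have hc0 : omul z₃ (oconj z₂) = 0 := by
    by_contra hne
    rw [LinearIndependent.pair_iff' hne] at hac
    rw [LinearIndependent.pair_iff' (by rw [hswapc]; exact neg_ne_zero.2 hne)] at hbc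
    push Not at hac hbc
    obtain ⟨r, hr⟩ := hac
    obtain ⟨s, hs⟩ := hbc
    rw [hswapa] at hr
    rw [hswapb, hswapc] at hs
    have hrel := LinearIndependent.pair_iff.1 h s r (by
      rw [← neg_eq_iff_eq_neg.2 hr, ← neg_eq_iff_eq_neg.2 hs]; module)
    rw [hrel.2, zero_smul] at hr
    exact ha0 (neg_eq_zero.1 hr.symm)
  rw [hc0, neg_zero] at hswapc
  have h23 : obil z₂ z₃ = 0 := by
    rw [← otr_omul_oconj, hswapc, otr_eq]; simp
  set w := α • z₂ + β • z₃ with hw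
  have hz0 : z₁ ≠ 0 := by
    intro h0
    apply ha0
    rw [h0]
    simp [omul, oconj]
  have hwz : omul w z₁ = -z₁ := by
    have : omul w (oconj z₁) = z₁ := by
      rw [hw, add_omul', smul_omul', smul_omul', ← hz₁]
    rw [hconj hz₁V] at this
    rw [← neg_eq_iff_eq_neg, this]
  have hQw : oQ w = 0 := by
    rw [hw, oQ_add_smul, h2, h3, h23]; ring
  have hw2 : obil w z₂ = 0 := by
    rw [hw, add_smul_obil, obil_self, h2, obil_comm z₃, h23]; ring
  have hw3 : obil w z₃ = 0 := by
    rw [hw, add_smul_obil, obil_self, h3, h23]; ring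
  have hw2' : omul z₂ (oconj w) = 0 := by
    rw [hw, oconj_add_smul, omul_add', omul_smul', omul_smul', omul_oconj_self, h2, hswapc]
    simp
  have hw3' : omul z₃ (oconj w) = 0 := by
    rw [hw, oconj_add_smul, omul_add', omul_smul', omul_smul', omul_oconj_self, h3, hc0]
    simp
  have hneg : ∀ {x : Oct k}, omul x (oconj z₁) ∈ V → omul x z₁ ∈ V := by
    intro x hx
    rw [hconj hz₁V] at hx
    exact neg_mem_iff.1 hx
  obtain ⟨r, hr⟩ := eq_smul_of_idempotent hz0 (htr _ hz₁V) hwz hQw hw2 hw2' (htr _ (hneg ha))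
  obtain ⟨s, hs⟩ := eq_smul_of_idempotent hz0 (htr _ hz₁V) hwz hQw hw3 hw3' (htr _ (hneg hb))
  have hrel := LinearIndependent.pair_iff.1 h s (-r) (by
    rw [hconj hz₁V, hconj hz₁V, hr, hs]; module)
  have hr0 := neg_eq_zero.1 hrel.2
  rw [hr0, zero_smul] at hr
  exact ha0 (by rw [hconj hz₁V, hr, neg_zero])

end Configuration

lemma exists_independent_pair {k E : Type*} [Field k] [AddCommGroup E] [Module k E] {a b c : E}
    (h : Module.finrank k ↥(Submodule.span k ({a, b, c} : Set E)) = 2) :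
    LinearIndependent k ![a, b] ∨ LinearIndependent k ![a, c] ∨ LinearIndependent k ![b, c] := by
  by_contra! hn
  obtain ⟨hab, hac, hbc⟩ := hn
  -- Otherwise all three vectors lie on a common line.
  have hline : ∃ d : E, Submodule.span k ({a, b, c} : Set E) ≤ Submodule.span k {d} := by
    by_cases ha : a = 0
    · by_cases hb : b = 0
      · refine ⟨c, Submodule.span_le.2 ?_⟩
        rintro x (rfl | rfl | rfl)
        · simp [ha]
        · simp [hb]
        · exact Submodule.mem_span_singleton_self _
      · rw [LinearIndependent.pair_iff' hb] at hbc
        push Not at hbc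
        obtain ⟨r, hr⟩ := hbc
        refine ⟨b, Submodule.span_le.2 ?_⟩
        rintro x (rfl | rfl | rfl)
        · simp [ha]
        · exact Submodule.mem_span_singleton_self _
        · exact Submodule.mem_span_singleton.2 ⟨r, hr⟩
    · rw [LinearIndependent.pair_iff' ha] at hab hac
      push Not at hab hac
      obtain ⟨r, hr⟩ := hab
      obtain ⟨s, hs⟩ := hac
      refine ⟨a, Submodule.span_le.2 ?_⟩
      rintro x (rfl | rfl | rfl)
      · exact Submodule.mem_span_singleton_self _
      · exact Submodule.mem_span_singleton.2 ⟨r, hr⟩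
      · exact Submodule.mem_span_singleton.2 ⟨s, hs⟩
  obtain ⟨d, hd⟩ := hline
  have h1 := Submodule.finrank_mono hd
  have h2 := finrank_span_le_card (R := k) ({d} : Set E)
  simp at h2
  omega

theorem stmt19 (k : Type*) [Field k] (a b c : Oct k)
    (ha : obil a (oOne k) = 0) (hb : obil b (oOne k) = 0) (hc : obil c (oOne k) = 0)
    (hdim : Module.finrank k ↥(Submodule.span k ({a, b, c} : Set (Oct k))) = 2)
    (hmul : ∀ u ∈ Submodule.span k ({a, b, c} : Set (Oct k)),
            ∀ v ∈ Submodule.span k ({a, b, c} : Set (Oct k)), omul u v = 0) :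
    ¬ ∃ z₁ z₂ z₃ : Oct k, oQ z₁ = 0 ∧ oQ z₂ = 0 ∧ oQ z₃ = 0 ∧
        omul z₂ (oconj z₁) = a ∧ omul z₃ (oconj z₁) = b ∧ omul z₃ (oconj z₂) = c := by
  rintro ⟨z₁, z₂, z₃, h1, h2, h3, rfl, rfl, rfl⟩
  set V := Submodule.span k
    ({omul z₂ (oconj z₁), omul z₃ (oconj z₁), omul z₃ (oconj z₂)} : Set (Oct k)) with hV
  have haV : omul z₂ (oconj z₁) ∈ V := Submodule.subset_span (by simp)
  have hbV : omul z₃ (oconj z₁) ∈ V := Submodule.subset_span (by simp)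
  have hcV : omul z₃ (oconj z₂) ∈ V := Submodule.subset_span (by simp)
  have htr : ∀ u ∈ V, obil u (oOne k) = 0 := by
    intro u hu
    induction hu using Submodule.span_induction with
    | mem x hx => rcases hx with rfl | rfl | rfl <;> assumption
    | zero => simp [otr_eq]
    | add x y _ _ hx hy => simpa [hx, hy] using add_smul_obil 1 1 x y (oOne k)
    | smul r x _ hx => rw [obil_smul', hx, mul_zero]
  have hsa := omul_oconj_swap_neg ha
  have hsb := omul_oconj_swap_neg hb
  have hsc := omul_oconj_swap_neg hc
  rcases exists_independent_pair hdim with h | h | h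
  · exact false_of_independent htr hmul h1 h2 h3 haV hbV hcV h
  · refine false_of_independent (z₁ := z₂) (z₂ := z₁) (z₃ := z₃) htr hmul h2 h1 h3
      (hsa ▸ V.neg_mem haV) hcV hbV ?_
    rw [hsa, LinearIndependent.pair_neg_left_iff]
    exact h
  · refine false_of_independent (z₁ := z₃) (z₂ := z₁) (z₃ := z₂) htr hmul h3 h1 h2
      (hsb ▸ V.neg_mem hbV) (hsc ▸ V.neg_mem hcV) haV ?_
    rw [hsb, hsc, LinearIndependent.pair_neg_left_iff, LinearIndependent.pair_neg_right_iff]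
    exact h
end
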